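/- Let L be the abelian group with generators x₁, x₂, x₃ and relations 2x₁ = 3x₂ = (u+1)x₃ for an integer u ≥ 1, and let ω = c − (x₁+x₂+x₃) where c = 2x₁. For integers a, b with 1 ≤ b ≤ 2u+1, one has a·x₁ − b·ω = 0 in L if and only if 3 divides u+1, a = (u−5)/3, and b = u+1. -/

import Mathlib

/-- The abelian group `L(2,3,u+1)` presented by generators `x₁, x₂, x₃`
and relations `2x₁ = 3x₂ = (u+1)x₃`. -/
abbrev Lgrp (u : ℤ) : Type :=
  (ℤ × ℤ × ℤ) ⧸
    AddSubgroup.closure ({((2, -3, 0) : ℤ × ℤ × ℤ), ((0, 3, -(u + 1)) : ℤ × ℤ × ℤ)} :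
      Set (ℤ × ℤ × ℤ))

def Lx1 (u : ℤ) : Lgrp u := QuotientAddGroup.mk ((1, 0, 0) : ℤ × ℤ × ℤ)
def Lx2 (u : ℤ) : Lgrp u := QuotientAddGroup.mk ((0, 1, 0) : ℤ × ℤ × ℤ)
def Lx3 (u : ℤ) : Lgrp u := QuotientAddGroup.mk ((0, 0, 1) : ℤ × ℤ × ℤ)

/-- The canonical element `c = 2x₁`. -/
def Lc (u : ℤ) : Lgrp u := (2 : ℤ) • Lx1 u

/-- The dualizing element `ω = c − (x₁ + x₂ + x₃)`. -/
def Lom (u : ℤ) : Lgrp u := Lc u - (Lx1 u + Lx2 u + Lx3 u)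

theorem stmt4 (u a b : ℤ) (hu : 1 ≤ u) (hb1 : 1 ≤ b) (hb2 : b ≤ 2 * u + 1) :
    a • Lx1 u - b • Lom u = 0 ↔ (3 ∣ (u + 1) ∧ 3 * a = u - 5 ∧ b = u + 1) := by
  have key : a • Lx1 u - b • Lom u =
      (QuotientAddGroup.mk ((a - b, b, b) : ℤ × ℤ × ℤ) : Lgrp u) := by
    simp only [Lom, Lc, Lx1, Lx2, Lx3, ← QuotientAddGroup.mk_zsmul, ← QuotientAddGroup.mk_add,
      ← QuotientAddGroup.mk_sub]
    congr 1
    ext <;> simp <;> ring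
  rw [key, QuotientAddGroup.eq_zero_iff, AddSubgroup.mem_closure_pair]
  constructor
  · rintro ⟨m, n, h⟩
    simp only [Prod.smul_mk, Prod.mk_add_mk, Prod.mk.injEq, smul_eq_mul] at h
    obtain ⟨h1, h2, h3⟩ := h
    have hn : n = -1 := by
      have h4 : n < 0 := by
        by_contra hc
        nlinarith [mul_nonneg (not_lt.mp hc) (by linarith : (0 : ℤ) ≤ u + 1)]
      have h5 : -2 < n := by
        by_contra hc
        nlinarith [mul_nonneg (by linarith : (0 : ℤ) ≤ -2 - n) (by linarith : (0 : ℤ) ≤ u + 1)]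
      omega
    subst hn
    refine ⟨⟨-m - 1, by linarith⟩, by linarith, by linarith⟩
  · rintro ⟨⟨k, hk⟩, h2, h3⟩
    refine ⟨-1 - k, -1, ?_⟩
    simp only [Prod.smul_mk, Prod.mk_add_mk, Prod.mk.injEq, smul_eq_mul]
    refine ⟨by linarith, by linarith, by linarith⟩
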